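/- arXiv:math/9802053 — 2 statements merged into one kernel-verified Lean document; each statement's English description precedes it below -/
import Mathlib

section
/- For every integer n ≥ 1 and all real numbers s, t, the polynomials x_n and y_n are invariant under rotation by 2π/n: x_n(ρ_{2π/n}(s,t)) = x_n(s,t) and y_n(ρ_{2π/n}(s,t)) = y_n(s,t). -/
/-!
Identify `ℝ²` with `ℂ` by `(s, t) ↦ s + i t`. The binomial theorem, split into even and odd terms,
gives `x_n + i y_n = (s + i t)^n` (`xPoly_add_yPoly_mul_I`), while the rotation `ρ_θ` becomes
multiplication by `exp (-i θ)` (`rot_eq_mul_exp`). For `θ = 2π/n` this factor is an `n`-th root of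
unity, so the `n`-th power is unchanged; compare real and imaginary parts.
-/

open Real

/-- `x_n(s,t) = ∑_{0 ≤ 2j ≤ n} (−1)^j · C(n,2j) · t^{2j} · s^{n−2j}`. -/
noncomputable def xPoly (n : ℕ) (s t : ℝ) : ℝ :=
  ∑ j ∈ Finset.range (n / 2 + 1), (-1 : ℝ) ^ j * (n.choose (2 * j) : ℝ) * t ^ (2 * j) * s ^ (n - 2 * j)

/-- `y_n(s,t) = ∑_{0 ≤ 2j+1 ≤ n} (−1)^j · C(n,2j+1) · t^{2j+1} · s^{n−2j−1}`. -/
noncomputable def yPoly (n : ℕ) (s t : ℝ) : ℝ :=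
  ∑ j ∈ Finset.range ((n + 1) / 2), (-1 : ℝ) ^ j * (n.choose (2 * j + 1) : ℝ) * t ^ (2 * j + 1) * s ^ (n - 2 * j - 1)

/-- The rotation `ρ_θ(s,t) = (s cos θ + t sin θ, −s sin θ + t cos θ)` of `ℝ²`. -/
noncomputable def rot (θ : ℝ) (p : ℝ × ℝ) : ℝ × ℝ :=
  (p.1 * Real.cos θ + p.2 * Real.sin θ, -p.1 * Real.sin θ + p.2 * Real.cos θ)

/-- Splitting a sum over an initial segment of `ℕ` into its even and odd terms. -/
lemma sum_range_even_odd (f : ℕ → ℂ) (m : ℕ) :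
    ∑ k ∈ Finset.range m, f k =
      ∑ j ∈ Finset.range ((m + 1) / 2), f (2 * j) +
        ∑ j ∈ Finset.range (m / 2), f (2 * j + 1) := by
  induction m with
  | zero => simp
  | succ m ih =>
    rw [Finset.sum_range_succ, ih]
    rcases Nat.even_or_odd' m with ⟨c, rfl | rfl⟩
    · rw [show (2 * c + 1 + 1) / 2 = c + 1 by omega, show (2 * c + 1) / 2 = c by omega,
        show 2 * c / 2 = c by omega, Finset.sum_range_succ]
      ring
    · rw [show (2 * c + 1 + 1 + 1) / 2 = c + 1 by omega, show (2 * c + 1 + 1) / 2 = c + 1 by omega,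
        show (2 * c + 1) / 2 = c by omega, Finset.sum_range_succ (fun j => f (2 * j + 1))]
      ring

/-- `x_n` and `y_n` are the real and imaginary parts of `(s + i t)^n`. -/
lemma xPoly_add_yPoly_mul_I (n : ℕ) (s t : ℝ) :
    (xPoly n s t : ℂ) + (yPoly n s t : ℂ) * Complex.I = ((s : ℂ) + t * Complex.I) ^ n := by
  rw [add_comm (s : ℂ), add_pow, sum_range_even_odd, show (n + 1 + 1) / 2 = n / 2 + 1 by omega]
  unfold xPoly yPoly
  push_cast
  rw [Finset.sum_mul]
  congr 1
  · refine Finset.sum_congr rfl fun j _ => ?_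
    rw [mul_pow, pow_mul Complex.I, Complex.I_sq]
    ring
  · refine Finset.sum_congr rfl fun j _ => ?_
    rw [mul_pow, pow_succ Complex.I, pow_mul Complex.I, Complex.I_sq, Nat.sub_sub]
    ring

/-- Under `ℝ² ≃ ℂ`, the map `rot θ` is multiplication by `exp (-i θ)`. -/
lemma rot_eq_mul_exp (θ s t : ℝ) :
    ((rot θ (s, t)).1 : ℂ) + ((rot θ (s, t)).2 : ℂ) * Complex.I =
      Complex.exp (-(θ * Complex.I)) * (s + t * Complex.I) := by
  rw [← neg_mul, Complex.exp_mul_I, Complex.cos_neg, Complex.sin_neg]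
  simp only [rot]
  push_cast
  linear_combination (Complex.sin θ * t) * Complex.I_sq

/-- `x_n` and `y_n` are invariant under rotation by `2π/n`. -/
theorem xPoly_yPoly_rot_invariant (n : ℕ) (hn : 1 ≤ n) (s t : ℝ) :
    xPoly n (rot (2 * π / n) (s, t)).1 (rot (2 * π / n) (s, t)).2 = xPoly n s t ∧
    yPoly n (rot (2 * π / n) (s, t)).1 (rot (2 * π / n) (s, t)).2 = yPoly n s t := by
  have hn0 : (n : ℂ) ≠ 0 := by exact_mod_cast (by omega : n ≠ 0)
  have hexp : Complex.exp (-(((2 * π / n : ℝ) : ℂ) * Complex.I)) ^ n = 1 := by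
    rw [← Complex.exp_nat_mul,
      show (n : ℂ) * (-(((2 * π / n : ℝ) : ℂ) * Complex.I)) = -(2 * π * Complex.I) by
        push_cast; field_simp,
      Complex.exp_neg, Complex.exp_two_pi_mul_I, inv_one]
  have key := xPoly_add_yPoly_mul_I n (rot (2 * π / n) (s, t)).1 (rot (2 * π / n) (s, t)).2
  rw [rot_eq_mul_exp, mul_pow, hexp, one_mul, ← xPoly_add_yPoly_mul_I] at key
  exact ⟨by simpa using congrArg Complex.re key, by simpa using congrArg Complex.im key⟩
end

section
/- Let n ≥ 1 be an integer, let A = ℝ[s,t]/(s² + t² − 1), and let σ be the ℝ-algebra automorphism of A induced by the rotation ρ_{2π/n} (i.e. σ(s) = s·cos(2π/n) + t·sin(2π/n) and σ(t) = −s·sin(2π/n) + t·cos(2π/n), which is well-defined since s² + t² is rotation-invariant). Then the subalgebra {a ∈ A : σ(a) = a} of σ-invariant elements equals the ℝ-subalgebra of A generated by the images of x_n and y_n. -/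
/-!
Write `z = s + i t` formally, and let `rePow s t k`, `imPow s t k` be the real and imaginary parts
of `z ^ k`, so that `x_n`, `y_n` are the case `k = n` (`xnPoly_ynPoly_eq`).

* On the circle, `z ^ k` and its conjugate are inverse to each other, so multiplication by `s` or
  `t` takes `Re z^k`, `Im z^k` to combinations of the parts of `z^(k-1)` and `z^(k+1)`.
  Hence the `Re z^k`, `Im z^k` span the circle ring over `ℝ` (`circle_span`).
* With `ζ = exp (2πi/n)`, the automorphism `σ` rotates the pair `(Re z^k, Im z^k)` by `ζ^k`
  (`map_rePow_imPow`). In particular `x_n` and `y_n` are fixed, which gives one inclusion.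
* The operator `E = ∑_{j<n} σ^j` acts on that pair through `∑_{j<n} ζ^(kj)`. This number
  vanishes unless `n ∣ k`, and for `k = n m` the pair consists of the parts of `(x_n + i y_n)^m`.
  So `E` sends everything into the algebra generated by `x_n, y_n`; an invariant `a` satisfies
  `E a = n a`, which gives the other inclusion. No linear independence is needed.
-/

open Real MvPolynomial

/-- `x_n` as a polynomial in `ℝ[s,t]` (variable `0` is `s`, variable `1` is `t`). -/
noncomputable def XnPoly (n : ℕ) : MvPolynomial (Fin 2) ℝ :=
  ∑ j ∈ Finset.range (n / 2 + 1),
    C ((-1 : ℝ) ^ j * (n.choose (2 * j) : ℝ)) * X 1 ^ (2 * j) * X 0 ^ (n - 2 * j)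

/-- `y_n` as a polynomial in `ℝ[s,t]`. -/
noncomputable def YnPoly (n : ℕ) : MvPolynomial (Fin 2) ℝ :=
  ∑ j ∈ Finset.range ((n + 1) / 2),
    C ((-1 : ℝ) ^ j * (n.choose (2 * j + 1) : ℝ)) * X 1 ^ (2 * j + 1) * X 0 ^ (n - 2 * j - 1)

/-- The ideal `(s² + t² − 1)` of `ℝ[s,t]`. -/
noncomputable def circleIdeal : Ideal (MvPolynomial (Fin 2) ℝ) :=
  Ideal.span {X 0 ^ 2 + X 1 ^ 2 - 1}

/-- The circle coordinate ring `A = ℝ[s,t]/(s² + t² − 1)`. -/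
abbrev CircleRing : Type := MvPolynomial (Fin 2) ℝ ⧸ circleIdeal

section Powers

variable {R : Type*} [CommRing R]

/-- The real and imaginary parts of the formal power `(s + i t) ^ k`, for `s`, `t` in an arbitrary
commutative ring. -/
def reImPow (s t : R) : ℕ → R × R
  | 0 => (1, 0)
  | k + 1 => ((reImPow s t k).1 * s - (reImPow s t k).2 * t,
      (reImPow s t k).1 * t + (reImPow s t k).2 * s)

/-- The real part of `(s + i t) ^ k`. -/
def rePow (s t : R) (k : ℕ) : R := (reImPow s t k).1

/-- The imaginary part of `(s + i t) ^ k`. -/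
def imPow (s t : R) (k : ℕ) : R := (reImPow s t k).2

lemma rePow_zero (s t : R) : rePow s t 0 = 1 := rfl

lemma imPow_zero (s t : R) : imPow s t 0 = 0 := rfl

lemma rePow_succ (s t : R) (k : ℕ) :
    rePow s t (k + 1) = rePow s t k * s - imPow s t k * t := rfl

lemma imPow_succ (s t : R) (k : ℕ) :
    imPow s t (k + 1) = rePow s t k * t + imPow s t k * s := rfl

lemma rePow_imPow_add (s t : R) (k l : ℕ) :
    rePow s t (k + l) = rePow s t k * rePow s t l - imPow s t k * imPow s t l ∧
    imPow s t (k + l) = rePow s t k * imPow s t l + imPow s t k * rePow s t l := by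
  induction l with
  | zero => simp [rePow_zero, imPow_zero]
  | succ l ih =>
    rw [← add_assoc, rePow_succ s t (k + l), imPow_succ s t (k + l), ih.1, ih.2, rePow_succ,
      imPow_succ]
    constructor <;> ring

lemma rePow_imPow_mul (s t : R) (n m : ℕ) :
    rePow s t (n * m) = rePow (rePow s t n) (imPow s t n) m ∧
    imPow s t (n * m) = imPow (rePow s t n) (imPow s t n) m := by
  induction m with
  | zero => simp [rePow_zero, imPow_zero]
  | succ m ih =>
    rw [Nat.mul_succ, (rePow_imPow_add s t _ _).1, (rePow_imPow_add s t _ _).2, ih.1, ih.2,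
      rePow_succ, imPow_succ]
    exact ⟨rfl, rfl⟩

lemma map_rePow_imPow_eq {S : Type*} [CommRing S] (f : R →+* S) (s t : R) (k : ℕ) :
    f (rePow s t k) = rePow (f s) (f t) k ∧ f (imPow s t k) = imPow (f s) (f t) k := by
  induction k with
  | zero => simp [rePow_zero, imPow_zero]
  | succ k ih => simp [rePow_succ, imPow_succ, ih.1, ih.2]

lemma rePow_add_imPow_mul_I (s t : ℝ) (k : ℕ) :
    ((rePow s t k : ℝ) : ℂ) + (imPow s t k : ℝ) * Complex.I = (s + t * Complex.I) ^ k := by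
  induction k with
  | zero => simp [rePow_zero, imPow_zero]
  | succ k ih =>
    rw [pow_succ, ← ih, rePow_succ, imPow_succ]
    push_cast
    linear_combination -((imPow s t k : ℝ) : ℂ) * t * Complex.I_sq

lemma rePow_imPow_mem [Algebra ℝ R] (S : Subalgebra ℝ R) {s t : R} (hs : s ∈ S) (ht : t ∈ S)
    (k : ℕ) : rePow s t k ∈ S ∧ imPow s t k ∈ S := by
  induction k with
  | zero => exact ⟨S.one_mem, S.zero_mem⟩
  | succ k ih =>
    exact ⟨S.sub_mem (S.mul_mem ih.1 hs) (S.mul_mem ih.2 ht),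
      S.add_mem (S.mul_mem ih.1 ht) (S.mul_mem ih.2 hs)⟩

/-- If `f` rotates `s + i t` by the complex number `ζ` (with the orientation
`s + i t ↦ conj ζ * (s + i t)`), then it rotates `(s + i t) ^ k` by `ζ ^ k`. -/
lemma map_rePow_imPow [Algebra ℝ R] (f : R →ₐ[ℝ] R) (s t : R) (ζ : ℂ)
    (hs : f s = ζ.re • s + ζ.im • t) (ht : f t = -ζ.im • s + ζ.re • t) (k : ℕ) :
    f (rePow s t k) = (ζ ^ k).re • rePow s t k + (ζ ^ k).im • imPow s t k ∧
    f (imPow s t k) = -(ζ ^ k).im • rePow s t k + (ζ ^ k).re • imPow s t k := by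
  induction k with
  | zero => simp [rePow_zero, imPow_zero]
  | succ k ih =>
    simp only [rePow_succ, imPow_succ, map_sub, map_add, map_mul, ih.1, ih.2, hs, ht, pow_succ,
      Complex.mul_re, Complex.mul_im, Algebra.smul_def, map_neg]
    constructor <;> ring

/-- On the circle, `z ^ k = z ^ (k + 1) * conj z`, in real and imaginary parts. -/
lemma rePow_imPow_pred {s t : R} (h : s ^ 2 + t ^ 2 = 1) (k : ℕ) :
    rePow s t k = rePow s t (k + 1) * s + imPow s t (k + 1) * t ∧
    imPow s t k = imPow s t (k + 1) * s - rePow s t (k + 1) * t := by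
  rw [rePow_succ, imPow_succ]
  constructor
  · linear_combination -rePow s t k * h
  · linear_combination -imPow s t k * h

end Powers

/-- The iterates of a linear map acting on a pair `(p, q)` as the rotation `ω`. -/
lemma pow_rotation {M : Type*} [AddCommGroup M] [Module ℝ M] (f : Module.End ℝ M) (p q : M) (ω : ℂ)
    (hp : f p = ω.re • p + ω.im • q) (hq : f q = -ω.im • p + ω.re • q) (j : ℕ) :
    (f ^ j) p = (ω ^ j).re • p + (ω ^ j).im • q ∧
    (f ^ j) q = -(ω ^ j).im • p + (ω ^ j).re • q := by
  induction j with
  | zero => simp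
  | succ j ih =>
    simp only [pow_succ', Module.End.mul_apply, ih.1, ih.2, map_add, map_smul, hp, hq,
      Complex.mul_re, Complex.mul_im]
    constructor <;> module

lemma sum_range_two_mul {M : Type*} [AddCommMonoid M] (f : ℕ → M) (N : ℕ) :
    ∑ k ∈ Finset.range (2 * N), f k =
      ∑ j ∈ Finset.range N, f (2 * j) + ∑ j ∈ Finset.range N, f (2 * j + 1) := by
  induction N with
  | zero => simp
  | succ N ih =>
    rw [Nat.mul_succ, Finset.sum_range_succ, Finset.sum_range_succ, ih, Finset.sum_range_succ,
      Finset.sum_range_succ]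
    abel

/-- The binomial theorem for `(s + i t) ^ n`, with even and odd powers of `t` separated. -/
lemma eval_xnPoly_add_ynPoly (n : ℕ) (v : Fin 2 → ℝ) :
    ((eval v (XnPoly n) : ℝ) : ℂ) + (eval v (YnPoly n) : ℝ) * Complex.I =
      (v 0 + v 1 * Complex.I) ^ n := by
  set f : ℕ → ℂ := fun k => (v 1 * Complex.I) ^ k * (v 0 : ℂ) ^ (n - k) * (n.choose k : ℂ) with hf
  have hf0 : ∀ k, n < k → f k = 0 := fun k hk => by simp [hf, Nat.choose_eq_zero_of_lt hk]
  have h1 : ((v 0 : ℂ) + v 1 * Complex.I) ^ n = ∑ k ∈ Finset.range (2 * (n + 1)), f k := by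
    rw [add_comm, add_pow]
    refine Finset.sum_subset (fun k hk => ?_) fun k _ hk => hf0 k ?_
    · simp only [Finset.mem_range] at *; omega
    · simp only [Finset.mem_range] at *; omega
  have h2 : ((eval v (XnPoly n) : ℝ) : ℂ) = ∑ j ∈ Finset.range (n + 1), f (2 * j) := by
    rw [← Finset.sum_subset (s₁ := Finset.range (n / 2 + 1)) (fun k hk => by
      simp only [Finset.mem_range] at *; omega) fun k _ hk => hf0 _ (by
      simp only [Finset.mem_range] at *; omega)]
    simp only [XnPoly, map_sum, map_mul, map_pow, eval_C, eval_X]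
    push_cast
    refine Finset.sum_congr rfl fun j _ => ?_
    simp only [hf, mul_pow, pow_mul Complex.I, Complex.I_sq]
    ring
  have h3 : ((eval v (YnPoly n) : ℝ) : ℂ) * Complex.I =
      ∑ j ∈ Finset.range (n + 1), f (2 * j + 1) := by
    rw [← Finset.sum_subset (s₁ := Finset.range ((n + 1) / 2)) (fun k hk => by
      simp only [Finset.mem_range] at *; omega) fun k _ hk => hf0 _ (by
      simp only [Finset.mem_range] at *; omega)]
    simp only [YnPoly, map_sum, map_mul, map_pow, eval_C, eval_X]
    push_cast
    rw [Finset.sum_mul]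
    refine Finset.sum_congr rfl fun j _ => ?_
    simp only [hf, mul_pow, pow_succ Complex.I (2 * j), pow_mul Complex.I, Complex.I_sq,
      Nat.sub_sub]
    ring
  rw [h1, sum_range_two_mul, h2, h3]

lemma xnPoly_ynPoly_eq (n : ℕ) :
    XnPoly n = rePow (X 0) (X 1) n ∧ YnPoly n = imPow (X 0) (X 1) n := by
  -- Polynomials over the infinite field `ℝ` are determined by their values.
  have key : ∀ v : Fin 2 → ℝ, eval v (XnPoly n) = rePow (v 0) (v 1) n ∧
      eval v (YnPoly n) = imPow (v 0) (v 1) n := fun v => by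
    have h := (eval_xnPoly_add_ynPoly n v).trans (rePow_add_imPow_mul_I (v 0) (v 1) n).symm
    have hre := congrArg Complex.re h
    have him := congrArg Complex.im h
    simp only [Complex.add_re, Complex.add_im, Complex.re_ofReal_mul, Complex.im_ofReal_mul,
      Complex.ofReal_re, Complex.ofReal_im, Complex.I_re, Complex.I_im, mul_zero, mul_one,
      add_zero, zero_add] at hre him
    exact ⟨hre, him⟩
  constructor <;> refine MvPolynomial.funext fun v => ?_
  · rw [(key v).1, (map_rePow_imPow_eq (eval v) _ _ n).1, eval_X, eval_X]
  · rw [(key v).2, (map_rePow_imPow_eq (eval v) _ _ n).2, eval_X, eval_X]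

/-- The span of all real and imaginary parts of powers of `s + i t`. -/
def powSpan {R : Type*} [CommRing R] [Algebra ℝ R] (s t : R) : Submodule ℝ R :=
  Submodule.span ℝ (Set.range (rePow s t) ∪ Set.range (imPow s t))

section Span

variable {R : Type*} [CommRing R] [Algebra ℝ R]

lemma rePow_mem_powSpan (s t : R) (k : ℕ) : rePow s t k ∈ powSpan s t :=
  Submodule.subset_span (Or.inl ⟨k, rfl⟩)

lemma imPow_mem_powSpan (s t : R) (k : ℕ) : imPow s t k ∈ powSpan s t :=
  Submodule.subset_span (Or.inr ⟨k, rfl⟩)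

lemma powSpan_mul_mem {s t : R} (h : s ^ 2 + t ^ 2 = 1) {a : R} (ha : a ∈ powSpan s t) :
    a * s ∈ powSpan s t ∧ a * t ∈ powSpan s t := by
  have half : ∀ {x y : R}, y ∈ powSpan s t → x + x = y → x ∈ powSpan s t := fun {x y} hy hxy => by
    have : x = (1 / 2 : ℝ) • y := by rw [← hxy]; module
    exact this ▸ Submodule.smul_mem _ _ hy
  have hre := rePow_mem_powSpan s t
  have him := imPow_mem_powSpan s t
  induction ha using Submodule.span_induction with
  | zero => simp
  | add x y _ _ hx hy =>
    rw [add_mul, add_mul]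
    exact ⟨Submodule.add_mem _ hx.1 hy.1, Submodule.add_mem _ hx.2 hy.2⟩
  | smul c x _ hx =>
    rw [smul_mul_assoc, smul_mul_assoc]
    exact ⟨Submodule.smul_mem _ _ hx.1, Submodule.smul_mem _ _ hx.2⟩
  | mem x hx =>
    rcases hx with ⟨k, rfl⟩ | ⟨k, rfl⟩
    · cases k with
      | zero =>
        have h1 := hre 1
        have h2 := him 1
        rw [rePow_succ, rePow_zero, imPow_zero, zero_mul, sub_zero] at h1
        rw [imPow_succ, rePow_zero, imPow_zero, zero_mul, add_zero] at h2
        exact ⟨h1, h2⟩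
      | succ k =>
        obtain ⟨h1, h2⟩ := rePow_imPow_pred h k
        refine ⟨half (Submodule.add_mem _ (hre k) (hre (k + 1 + 1))) ?_,
          half (Submodule.sub_mem _ (him (k + 1 + 1)) (him k)) ?_⟩
        · rw [rePow_succ s t (k + 1), h1]; ring
        · rw [imPow_succ s t (k + 1), h2]; ring
    · cases k with
      | zero => simp [imPow_zero]
      | succ k =>
        obtain ⟨h1, h2⟩ := rePow_imPow_pred h k
        refine ⟨half (Submodule.add_mem _ (him k) (him (k + 1 + 1))) ?_,
          half (Submodule.sub_mem _ (hre k) (hre (k + 1 + 1))) ?_⟩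
        · rw [imPow_succ s t (k + 1), h2]; ring
        · rw [rePow_succ s t (k + 1), h1]; ring

end Span

lemma circle_relation :
    (Ideal.Quotient.mk circleIdeal (X 0)) ^ 2 + (Ideal.Quotient.mk circleIdeal (X 1)) ^ 2 = 1 := by
  rw [← sub_eq_zero, ← map_pow, ← map_pow, ← map_add, ← map_one (Ideal.Quotient.mk circleIdeal),
    ← map_sub, Ideal.Quotient.eq_zero_iff_mem]
  exact Ideal.subset_span rfl

/-- The real and imaginary parts of the powers `(s + i t) ^ k` span the circle ring. -/
lemma circle_span (a : CircleRing) :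
    a ∈ powSpan (Ideal.Quotient.mk circleIdeal (X 0)) (Ideal.Quotient.mk circleIdeal (X 1)) := by
  obtain ⟨p, rfl⟩ := Ideal.Quotient.mk_surjective a
  induction p using MvPolynomial.induction_on with
  | C r =>
    have : Ideal.Quotient.mk circleIdeal (C r) = r • (1 : CircleRing) :=
      Algebra.algebraMap_eq_smul_one (A := CircleRing) r
    rw [this]
    exact Submodule.smul_mem _ _ (rePow_mem_powSpan _ _ 0)
  | add p q hp hq => rw [map_add]; exact Submodule.add_mem _ hp hq
  | mul_X p i hp =>
    rw [map_mul]
    have := powSpan_mul_mem circle_relation hp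
    fin_cases i
    exacts [this.1, this.2]

/-- Let `σ` be the ℝ-algebra endomorphism of `A = ℝ[s,t]/(s² + t² − 1)` induced by the
rotation `ρ_{2π/n}`, i.e. `σ(s) = s cos(2π/n) + t sin(2π/n)` and
`σ(t) = −s sin(2π/n) + t cos(2π/n)`.  Then the `σ`-invariant subalgebra of `A`
equals the ℝ-subalgebra generated by the images of `x_n` and `y_n`. -/
theorem circle_invariants_eq_adjoin (n : ℕ) (hn : 1 ≤ n)
    (σ : CircleRing →ₐ[ℝ] CircleRing)
    (hσs : σ (Ideal.Quotient.mk circleIdeal (X 0)) =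
      Ideal.Quotient.mk circleIdeal
        (C (Real.cos (2 * π / n)) * X 0 + C (Real.sin (2 * π / n)) * X 1))
    (hσt : σ (Ideal.Quotient.mk circleIdeal (X 1)) =
      Ideal.Quotient.mk circleIdeal
        (- C (Real.sin (2 * π / n)) * X 0 + C (Real.cos (2 * π / n)) * X 1))
    (a : CircleRing) :
    σ a = a ↔
      a ∈ Algebra.adjoin ℝ
        ({Ideal.Quotient.mk circleIdeal (XnPoly n),
          Ideal.Quotient.mk circleIdeal (YnPoly n)} : Set CircleRing) := by
  set s : CircleRing := Ideal.Quotient.mk circleIdeal (X 0) with hs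
  set t : CircleRing := Ideal.Quotient.mk circleIdeal (X 1) with ht
  have hC : ∀ (r : ℝ) (x : CircleRing), Ideal.Quotient.mk circleIdeal (C r) * x = r • x :=
    fun r x => (Algebra.smul_def r x).symm
  have hX : Ideal.Quotient.mk circleIdeal (XnPoly n) = rePow s t n := by
    rw [(xnPoly_ynPoly_eq n).1, (map_rePow_imPow_eq _ _ _ n).1]
  have hY : Ideal.Quotient.mk circleIdeal (YnPoly n) = imPow s t n := by
    rw [(xnPoly_ynPoly_eq n).2, (map_rePow_imPow_eq _ _ _ n).2]
  rw [hX, hY]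
  set S := Algebra.adjoin ℝ ({rePow s t n, imPow s t n} : Set CircleRing) with hS
  have hn0 : n ≠ 0 := by omega
  set ζ : ℂ := Complex.exp (2 * π * Complex.I / n) with hζ
  have hprim : IsPrimitiveRoot ζ n := Complex.isPrimitiveRoot_exp n hn0
  have hζ' : ζ = Complex.exp ((2 * π / n : ℝ) * Complex.I) := by
    rw [hζ]; congr 1; push_cast; ring
  have hre : ζ.re = Real.cos (2 * π / n) := by rw [hζ', Complex.exp_ofReal_mul_I_re]
  have him : ζ.im = Real.sin (2 * π / n) := by rw [hζ', Complex.exp_ofReal_mul_I_im]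
  have hrot := map_rePow_imPow σ s t ζ
    (by rw [hσs, map_add, map_mul, map_mul, hC, hC, hre, him])
    (by rw [hσt, ← C_neg, map_add, map_mul, map_mul, hC, hC, hre, him])
  constructor
  · intro ha
    have hmem : ∀ k, n ∣ k → rePow s t k ∈ S ∧ imPow s t k ∈ S := by
      rintro _ ⟨m, rfl⟩
      rw [(rePow_imPow_mul s t n m).1, (rePow_imPow_mul s t n m).2]
      exact rePow_imPow_mem S (Algebra.subset_adjoin (by simp)) (Algebra.subset_adjoin (by simp)) m
    have hgeom : ∀ k, ¬ n ∣ k → ∑ j ∈ Finset.range n, (ζ ^ k) ^ j = 0 := fun k hk => by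
      have h1 : ζ ^ k ≠ 1 := fun h => hk ((hprim.pow_eq_one_iff_dvd k).1 h)
      rw [geom_sum_eq h1, ← pow_mul, mul_comm, pow_mul, hprim.pow_eq_one, one_pow, sub_self,
        zero_div]
    set E : Module.End ℝ CircleRing := ∑ j ∈ Finset.range n, σ.toLinearMap ^ j with hE
    have hEk : ∀ k, E (rePow s t k) ∈ S ∧ E (imPow s t k) ∈ S := fun k => by
      have hj := pow_rotation σ.toLinearMap _ _ _ (hrot k).1 (hrot k).2
      have e1 : E (rePow s t k) = (∑ j ∈ Finset.range n, (ζ ^ k) ^ j).re • rePow s t k +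
          (∑ j ∈ Finset.range n, (ζ ^ k) ^ j).im • imPow s t k := by
        rw [hE, LinearMap.sum_apply, Finset.sum_congr rfl fun j _ => (hj j).1,
          Finset.sum_add_distrib, ← Finset.sum_smul, ← Finset.sum_smul, Complex.re_sum,
          Complex.im_sum]
      have e2 : E (imPow s t k) = -(∑ j ∈ Finset.range n, (ζ ^ k) ^ j).im • rePow s t k +
          (∑ j ∈ Finset.range n, (ζ ^ k) ^ j).re • imPow s t k := by
        rw [hE, LinearMap.sum_apply, Finset.sum_congr rfl fun j _ => (hj j).2,
          Finset.sum_add_distrib, ← Finset.sum_smul, ← Finset.sum_smul, Complex.re_sum,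
          Complex.im_sum, Finset.sum_neg_distrib]
      rw [e1, e2]
      by_cases hk : n ∣ k
      · obtain ⟨h1, h2⟩ := hmem k hk
        exact ⟨S.add_mem (S.smul_mem h1 _) (S.smul_mem h2 _),
          S.add_mem (S.smul_mem h1 _) (S.smul_mem h2 _)⟩
      · rw [hgeom k hk]
        simp
    have hEall : powSpan s t ≤ (Subalgebra.toSubmodule S).comap E := by
      refine Submodule.span_le.2 ?_
      rintro _ (⟨k, rfl⟩ | ⟨k, rfl⟩)
      exacts [(hEk k).1, (hEk k).2]
    have hEa : E a = (n : ℝ) • a := by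
      have hj : ∀ j, (σ.toLinearMap ^ j) a = a := fun j => by
        rw [Module.End.pow_apply]
        exact Function.iterate_fixed ha j
      rw [hE, LinearMap.sum_apply, Finset.sum_congr rfl fun j _ => hj j, Finset.sum_const,
        Finset.card_range, Nat.cast_smul_eq_nsmul]
    have hE_mem : E a ∈ S := hEall (circle_span a)
    have hn0' : (n : ℝ) ≠ 0 := Nat.cast_ne_zero.2 hn0
    have : a = (n : ℝ)⁻¹ • E a := by rw [hEa, inv_smul_smul₀ hn0']
    rw [this]
    exact S.smul_mem hE_mem _
  · have hle : S ≤ AlgHom.equalizer σ (AlgHom.id ℝ CircleRing) := by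
      refine Algebra.adjoin_le ?_
      have h := hrot n
      rw [hprim.pow_eq_one] at h
      rintro _ (rfl | rfl)
      · simpa using h.1
      · simpa using h.2
    exact fun ha => hle ha
end
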